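/- Let F be a finite field, m ≥ 1 a natural number, and I a finite index set. For each i ∈ I let c_i be a multivariate polynomial in 2m variables over F of total degree at most 2m and let C_i ∈ F. Suppose A : {0,1}^m → F is an assignment satisfying every equation, i.e. for every i ∈ I, Σ_{α,β ∈ {0,1}^m} c_i(α,β) · A(α) · A(β) = C_i. Then there exist: a multivariate polynomial f in m variables over F of total degree at most m with f(α) = A(α) for all α ∈ {0,1}^m; for every (a,b) ∈ F^m × F^m a univariate polynomial g_{a,b} over F of degree at most m; and for every i ∈ I, every 0 ≤ j ≤ 2m−1 and every (a₁,…,a_j) ∈ F^j a univariate polynomial p_{i,a₁,…,a_j} over F of degree at most 4m, such that for every i ∈ I and all α, β ∈ F^m, writing (a₁,…,a_{2m}) := (α₁,…,α_m,β₁,…,β_m), all of the following hold: (1) g_{β−α, α}(0) = f(α) and g_{β−α, α}(1) = f(β); (2) p_{i,∅}(0) + p_{i,∅}(1) = C_i; (3) for every 1 ≤ j ≤ 2m−1, p_{i,a₁,…,a_{j−1}}(a_j) = p_{i,a₁,…,a_j}(0) + p_{i,a₁,…,a_j}(1); (4) p_{i,a₁,…,a_{2m−1}}(a_{2m}) = c_i(α,β)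 · f(α) · f(β). -/

import Mathlib

/-!
The Points table is the multilinear extension `f` of `A`, and the Lines table is `f` restricted to
each line. For the Partial Sums table, let `h = cᵢ · f(x₁,…,x_m) · f(x_{m+1},…,x_{2m})`, which has
total degree at most `2m + m + m = 4m`, and let `p_{i,a₁,…,a_j}(X)` be the sum of
`h(a₁,…,a_j,X,γ)` over all Boolean `γ`. Its value at `x` is a partial cube sum of `h`
(`cubeSum`), and splitting such a sum on its first Boolean coordinate (`cubeSum_split`) is exactly
what tests (2) and (3) demand. With no Boolean coordinate left it is `h` itself, which is
test (4); with all coordinates Boolean it is the left-hand side of the `i`-th equation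
(`cubeSum_zero`), so its value is `Cᵢ`.
-/

open MvPolynomial Polynomial

/-- Embedding of the Boolean cube `{0,1}^m` into `F^m`. -/
def boolToField {F : Type*} [Field F] {m : ℕ} (α : Fin m → Bool) : Fin m → F :=
  fun i => if α i then 1 else 0

/-- The point of `F^(2m)` obtained by concatenating `α, β ∈ F^m`. -/
def pairPoint {F : Type*} [Field F] (m : ℕ) (α β : Fin m → F) : Fin (2 * m) → F :=
  fun i =>
    if h : (i : ℕ) < m then α ⟨i, h⟩
    else β ⟨(i : ℕ) - m, by have := i.2; omega⟩

/-- The four tests of the PCP verifier (low degree test combined with the sum check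
protocol) for equation `i` (with right-hand side `Ci` and coefficient polynomial
`ci`) at the random choice `(α, β) ∈ F^m × F^m`, with Points table `f`, Lines
table `g` and Partial Sums table `p`.  Writing
`(a₁,…,a_{2m}) := (α₁,…,α_m,β₁,…,β_m)`:
(1) `g_{β-α,α}(0) = f(α)` and `g_{β-α,α}(1) = f(β)`;
(2) `p_{i,∅}(0) + p_{i,∅}(1) = Cᵢ`;
(3) for `1 ≤ j ≤ 2m-1`,
    `p_{i,a₁,…,a_{j-1}}(a_j) = p_{i,a₁,…,a_j}(0) + p_{i,a₁,…,a_j}(1)`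
    (reindexed with `t = j - 1`);
(4) `p_{i,a₁,…,a_{2m-1}}(a_{2m}) = cᵢ(α,β) · f(α) · f(β)`. -/
def PCPAccepts {F : Type*} [Field F] (m : ℕ) (hm : 1 ≤ m)
    (f : (Fin m → F) → F)
    (g : (Fin m → F) → (Fin m → F) → Polynomial F)
    (p : (j : ℕ) → (Fin j → F) → Polynomial F)
    (Ci : F) (ci : MvPolynomial (Fin (2 * m)) F)
    (α β : Fin m → F) : Prop :=
  ((g (β - α) α).eval 0 = f α) ∧
  ((g (β - α) α).eval 1 = f β) ∧
  ((p 0 (fun s => s.elim0)).eval 0 + (p 0 (fun s => s.elim0)).eval 1 = Ci) ∧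
  (∀ t : ℕ, ∀ _ht : t < 2 * m - 1,
    (p t (fun s : Fin t => pairPoint m α β ⟨s, by have := s.2; omega⟩)).eval
        (pairPoint m α β ⟨t, by omega⟩) =
      (p (t + 1) (fun s : Fin (t + 1) =>
          pairPoint m α β ⟨s, by have := s.2; omega⟩)).eval 0 +
      (p (t + 1) (fun s : Fin (t + 1) =>
          pairPoint m α β ⟨s, by have := s.2; omega⟩)).eval 1) ∧
  ((p (2 * m - 1) (fun s : Fin (2 * m - 1) =>
        pairPoint m α β ⟨s, by have := s.2; omega⟩)).eval
      (pairPoint m α β ⟨2 * m - 1, by omega⟩) =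
    MvPolynomial.eval (pairPoint m α β) ci * f α * f β)

/-- The multilinear extension of `A : {0,1}^m → F` to `F^m`. -/
noncomputable def multilinExt {F : Type*} [Field F] {m : ℕ} (A : (Fin m → Bool) → F) :
    MvPolynomial (Fin m) F :=
  ∑ α : Fin m → Bool, MvPolynomial.C (A α) *
    ∏ i, (if α i then MvPolynomial.X i else 1 - MvPolynomial.X i)

theorem multilinExt_totalDegree {F : Type*} [Field F] {m : ℕ} (A : (Fin m → Bool) → F) :
    (multilinExt A).totalDegree ≤ m := by
  refine MvPolynomial.totalDegree_finsetSum_le fun α _ => ?_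
  refine (MvPolynomial.totalDegree_mul _ _).trans ?_
  rw [MvPolynomial.totalDegree_C, zero_add]
  refine (MvPolynomial.totalDegree_finsetProd _ _).trans ?_
  refine (Finset.sum_le_card_nsmul _ _ 1 fun i _ => ?_).trans (by simp)
  split_ifs
  · simp
  · refine (MvPolynomial.totalDegree_sub _ _).trans ?_
    simp

theorem multilinExt_eval {F : Type*} [Field F] {m : ℕ} (A : (Fin m → Bool) → F)
    (α : Fin m → Bool) : MvPolynomial.eval (boolToField α) (multilinExt A) = A α := by
  rw [multilinExt, map_sum, Finset.sum_eq_single α]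
  · rw [map_mul, map_prod, MvPolynomial.eval_C, Finset.prod_eq_one, mul_one]
    intro i _
    cases h : α i <;> simp [boolToField, h]
  · intro β _ hβ
    obtain ⟨i, hi⟩ := Function.ne_iff.mp hβ
    rw [map_mul, map_prod, Finset.prod_eq_zero (Finset.mem_univ i), mul_zero]
    cases h : α i <;> cases h' : β i <;> simp_all [boolToField]
  · simp

/-- The sum of `h(b₀,…,b_{t-1},γ)` over all Boolean `γ`. A choice of `γ` is encoded as the set `U`
of those coordinates `s ≥ t` at which it equals `1`. -/
def cubeSum {F : Type*} [Field F] {N : ℕ} (h : (Fin N → F) → F) (t : ℕ) (b : Fin N → F) : F :=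
  ∑ U ∈ (Finset.univ.filter fun s : Fin N => t ≤ s).powerset,
    h fun s => if (s : ℕ) < t then b s else if s ∈ U then 1 else 0

/-- The term `0` collects the choices with `γ_t = 0` and the term `1` those with `γ_t = 1`. -/
theorem cubeSum_split {F : Type*} [Field F] {N : ℕ} (h : (Fin N → F) → F) (t : Fin N)
    (b : Fin N → F) :
    cubeSum h t b = cubeSum h (t + 1) (Function.update b t 0) +
      cubeSum h (t + 1) (Function.update b t 1) := by
  have hset : (Finset.univ.filter fun s : Fin N => (t : ℕ) ≤ s) =
      insert t (Finset.univ.filter fun s : Fin N => (t : ℕ) + 1 ≤ s) := by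
    ext s
    simp only [Finset.mem_filter, Finset.mem_univ, true_and, Finset.mem_insert, Fin.ext_iff]
    omega
  rw [cubeSum, hset, Finset.sum_powerset_insert (by simp)]
  refine congrArg₂ _ ?_ ?_ <;>
  · refine Finset.sum_congr rfl fun U hU => congrArg h (funext fun s => ?_)
    have htU : t ∉ U := fun h' => by simpa using Finset.mem_powerset.mp hU h'
    rcases lt_trichotomy s t with hs | rfl | hs
    · have : (s : ℕ) < t := hs
      simp [this, this.trans (Nat.lt_succ_self _), hs.ne]
    · simp [htU]
    · have hs' : (t : ℕ) < s := hs
      have h1 : ¬ (s : ℕ) < t := by omega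
      have h2 : ¬ (s : ℕ) < t + 1 := by omega
      simp [h1, h2, hs.ne']

theorem cubeSum_top {F : Type*} [Field F] {N : ℕ} (h : (Fin N → F) → F) (b : Fin N → F) :
    cubeSum h N b = h b := by
  have : (Finset.univ.filter fun s : Fin N => N ≤ s) = ∅ := by
    ext s
    simp
  simp [cubeSum, this]

theorem cubeSum_zero {F : Type*} [Field F] {m : ℕ} (h : (Fin (2 * m) → F) → F)
    (b : Fin (2 * m) → F) :
    cubeSum h 0 b = ∑ α : Fin m → Bool, ∑ β : Fin m → Bool,
      h (pairPoint m (boolToField α) (boolToField β)) := by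
  rw [← Fintype.sum_prod_type']
  refine Finset.sum_bij'
    (fun U _ => (fun s => decide (⟨s, by omega⟩ ∈ U), fun s => decide (⟨s + m, by omega⟩ ∈ U)))
    (fun q _ => Finset.univ.filter fun s : Fin (2 * m) =>
      if hs : (s : ℕ) < m then q.1 ⟨s, hs⟩ = true else q.2 ⟨s - m, by omega⟩ = true)
    (by simp) (by simp) ?_ ?_ ?_
  · intro U _
    ext s
    by_cases hs : (s : ℕ) < m
    · simp [hs]
    · have : (s : ℕ) - m + m = s := by omega
      simp [hs, this]
  · rintro ⟨α, β⟩ _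
    refine Prod.ext (funext fun s => ?_) (funext fun s => ?_)
    · simp
    · simp
  · intro U _
    refine congrArg h (funext fun s => ?_)
    by_cases hs : (s : ℕ) < m
    · simp [pairPoint, boolToField, hs]
    · have : (s : ℕ) - m + m = s := by omega
      simp [pairPoint, boolToField, hs, this]

/-- The honest sum check polynomial: the sum of `h(a₀,…,a_{j-1},X,γ)` over all Boolean `γ`, encoded
as in `cubeSum`. -/
noncomputable def partialSum {F : Type*} [Field F] {N : ℕ} (h : MvPolynomial (Fin N) F) (j : ℕ)
    (a : Fin j → F) : Polynomial F :=
  ∑ U ∈ (Finset.univ.filter fun s : Fin N => j + 1 ≤ s).powerset,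
    MvPolynomial.aeval (fun s : Fin N =>
      if hs : (s : ℕ) < j then Polynomial.C (a ⟨s, hs⟩)
      else if (s : ℕ) = j then Polynomial.X
      else if s ∈ U then 1 else 0) h

theorem partialSum_natDegree {F : Type*} [Field F] {N : ℕ} (h : MvPolynomial (Fin N) F) (j : ℕ)
    (a : Fin j → F) {d : ℕ} (hd : h.totalDegree ≤ d) : (partialSum h j a).natDegree ≤ d := by
  refine Polynomial.natDegree_sum_le_of_forall_le _ _ fun U _ => ?_
  refine (MvPolynomial.aeval_natDegree_le h hd _ (n := 1) fun s => ?_).trans (by simp)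
  split_ifs <;> simp

theorem eval_aeval_poly {F σ : Type*} [Field F] (q : MvPolynomial σ F)
    (w : σ → Polynomial F) (x : F) :
    (MvPolynomial.aeval w q).eval x = MvPolynomial.eval (fun s => (w s).eval x) q := by
  induction q using MvPolynomial.induction_on <;> simp_all

theorem partialSum_eval {F : Type*} [Field F] {N : ℕ} (h : MvPolynomial (Fin N) F) (j : Fin N)
    (b : Fin N → F) (x : F) :
    (partialSum h j (fun s : Fin (j : ℕ) => b ⟨s, by omega⟩)).eval x =
      cubeSum (fun y => MvPolynomial.eval y h) (j + 1) (Function.update b j x) := by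
  rw [partialSum, Polynomial.eval_finsetSum]
  refine Finset.sum_congr rfl fun U _ => ?_
  rw [eval_aeval_poly]
  refine congrArg (fun y => MvPolynomial.eval y h) (funext fun s => ?_)
  rcases lt_trichotomy s j with hs | rfl | hs
  · have : (s : ℕ) < j := hs
    simp [this, this.trans (Nat.lt_succ_self _), hs.ne]
  · simp
  · have hs' : (j : ℕ) < s := hs
    have h1 : ¬ (s : ℕ) < j := by omega
    have h2 : ¬ (s : ℕ) < j + 1 := by omega
    have h3 : ¬ (s : ℕ) = j := by omega
    simp only [h1, h2, h3, dite_false, if_false]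
    split_ifs <;> simp

/-- The polynomial `c(x) · f(x₁,…,x_m) · f(x_{m+1},…,x_{2m})` whose cube sum the protocol checks. -/
noncomputable def summand {F : Type*} [Field F] {m : ℕ} (c : MvPolynomial (Fin (2 * m)) F)
    (f : MvPolynomial (Fin m) F) : MvPolynomial (Fin (2 * m)) F :=
  c * MvPolynomial.rename (fun s : Fin m => (⟨s, by omega⟩ : Fin (2 * m))) f *
    MvPolynomial.rename (fun s : Fin m => (⟨s + m, by omega⟩ : Fin (2 * m))) f

theorem summand_eval {F : Type*} [Field F] {m : ℕ} (c : MvPolynomial (Fin (2 * m)) F)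
    (f : MvPolynomial (Fin m) F) (α β : Fin m → F) :
    MvPolynomial.eval (pairPoint m α β) (summand c f) =
      MvPolynomial.eval (pairPoint m α β) c * MvPolynomial.eval α f * MvPolynomial.eval β f := by
  have h1 : pairPoint m α β ∘ (fun s : Fin m => (⟨s, by omega⟩ : Fin (2 * m))) = α := by
    funext s
    simp [pairPoint]
  have h2 : pairPoint m α β ∘ (fun s : Fin m => (⟨s + m, by omega⟩ : Fin (2 * m))) = β := by
    funext s
    simp [pairPoint]
  rw [summand, map_mul, map_mul, MvPolynomial.eval_rename, MvPolynomial.eval_rename, h1, h2]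

theorem summand_totalDegree {F : Type*} [Field F] {m : ℕ} (c : MvPolynomial (Fin (2 * m)) F)
    (f : MvPolynomial (Fin m) F) (hc : c.totalDegree ≤ 2 * m) (hf : f.totalDegree ≤ m) :
    (summand c f).totalDegree ≤ 4 * m := by
  have h1 := MvPolynomial.totalDegree_rename_le
    (fun s : Fin m => (⟨s, by omega⟩ : Fin (2 * m))) f
  have h2 := MvPolynomial.totalDegree_rename_le
    (fun s : Fin m => (⟨s + m, by omega⟩ : Fin (2 * m))) f
  refine (MvPolynomial.totalDegree_mul _ _).trans ?_
  refine (Nat.add_le_add_right (MvPolynomial.totalDegree_mul _ _) _).trans ?_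
  omega

/-- **Completeness of the PCP (low degree test plus sum check).**  If the assignment
`A : {0,1}^m → F` satisfies every equation
`∑_{α,β ∈ {0,1}^m} cᵢ(α,β) · A(α) · A(β) = Cᵢ`, then there are proof tables — a
degree-`m` extension `f` of `A` (Points table), degree-`m` univariate polynomials
`g_{a,b}` for every line (Lines table), and degree-`4m` univariate polynomials
`p_{i,a₁,…,a_j}` (Partial Sums table) — such that the PCP verifier accepts for every
equation `i` and every choice `(α, β) ∈ F^m × F^m`. -/
theorem pcp_completeness {F : Type*} [Field F] [Fintype F]
    (m : ℕ) (hm : 1 ≤ m) {I : Type*} [Fintype I]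
    (c : I → MvPolynomial (Fin (2 * m)) F)
    (hc : ∀ i, (c i).totalDegree ≤ 2 * m)
    (C : I → F)
    (A : (Fin m → Bool) → F)
    (hA : ∀ i, ∑ α : Fin m → Bool, ∑ β : Fin m → Bool,
        MvPolynomial.eval (pairPoint m (boolToField α) (boolToField β)) (c i) *
          A α * A β = C i) :
    ∃ (f : MvPolynomial (Fin m) F)
      (g : (Fin m → F) → (Fin m → F) → Polynomial F)
      (p : I → (j : ℕ) → (Fin j → F) → Polynomial F),
      f.totalDegree ≤ m ∧
      (∀ α : Fin m → Bool, MvPolynomial.eval (boolToField α) f = A α) ∧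
      (∀ a b : Fin m → F, (g a b).natDegree ≤ m) ∧
      (∀ i : I, ∀ j < 2 * m, ∀ a : Fin j → F, (p i j a).natDegree ≤ 4 * m) ∧
      (∀ (i : I) (α β : Fin m → F),
        PCPAccepts m hm (fun y => MvPolynomial.eval y f) g (p i) (C i) (c i) α β) := by
  set f := multilinExt A
  have hfdeg : f.totalDegree ≤ m := multilinExt_totalDegree A
  have hfA : ∀ α, MvPolynomial.eval (boolToField α) f = A α := multilinExt_eval A
  refine ⟨f, fun a b => MvPolynomial.aeval
      (fun s => Polynomial.C (a s) * Polynomial.X + Polynomial.C (b s)) f,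
    fun i j a => partialSum (summand (c i) f) j a, hfdeg, hfA, fun a b => ?_,
    fun i j _ a => partialSum_natDegree _ _ _ (summand_totalDegree _ _ (hc i) hfdeg),
    fun i α β => ⟨?_, ?_, ?_, fun t ht => ?_, ?_⟩⟩
  · refine (MvPolynomial.aeval_natDegree_le f hfdeg _ (n := 1) fun s => ?_).trans (by simp)
    exact Polynomial.natDegree_linear_le
  · simp [eval_aeval_poly]
  · simp [eval_aeval_poly]
  · have key := partialSum_eval (summand (c i) f) ⟨0, by omega⟩ (pairPoint m α β)
    have hsplit := cubeSum_split (fun y => MvPolynomial.eval y (summand (c i) f)) ⟨0, by omega⟩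
      (pairPoint m α β)
    -- All functions out of `Fin 0` agree, so the empty prefix is the prefix of any point.
    have he : (fun s : Fin 0 => (s.elim0 : F)) =
        fun s : Fin 0 => pairPoint m α β ⟨s, by omega⟩ := funext fun s => s.elim0
    beta_reduce
    rw [he]
    refine (congrArg₂ _ (key 0) (key 1)).trans (hsplit.symm.trans ?_)
    refine (cubeSum_zero _ _).trans ?_
    simp only [summand_eval, hfA]
    exact hA i
  · have k1 := partialSum_eval (summand (c i) f) ⟨t, by omega⟩ (pairPoint m α β)
      (pairPoint m α β ⟨t, by omega⟩)
    have k2 := partialSum_eval (summand (c i) f) ⟨t + 1, by omega⟩ (pairPoint m α β)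
    rw [Function.update_eq_self] at k1
    refine k1.trans ((cubeSum_split _ ⟨t + 1, by omega⟩ _).trans ?_)
    exact (congrArg₂ _ (k2 0) (k2 1)).symm
  · have k1 := partialSum_eval (summand (c i) f) ⟨2 * m - 1, by omega⟩ (pairPoint m α β)
      (pairPoint m α β ⟨2 * m - 1, by omega⟩)
    rw [Function.update_eq_self] at k1
    refine k1.trans ?_
    have hN : 2 * m - 1 + 1 = 2 * m := by omega
    simp only [hN, cubeSum_top, summand_eval]
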